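/- arXiv:1501.00729 — 2 statements merged into one kernel-verified Lean document; each statement's English description precedes it below -/
import Mathlib

section
/- Let T : ℝⁿ → ℝ^{n×n} be a smooth matrix-valued map such that T(q) is invertible for every q ∈ ℝⁿ, and regard its columns (T)_i = T e_i as smooth vector fields on ℝⁿ. Then the following are equivalent: (i) the columns of T pairwise commute, i.e. the Lie bracket [(T)_i, (T)_j](q) = 0 for all q ∈ ℝⁿ and all i, j ∈ {1,…,n}; (ii) there exists a smooth map Q : ℝⁿ → ℝⁿ whose Jacobian matrix satisfies ∇Q(q) = T(q)^{-1} for all q ∈ ℝⁿ. -/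
open Matrix

/-- The Jacobian matrix of a map `X : ℝⁿ → ℝⁿ` at a point `q`:
its `(i,j)` entry is the `i`-th component of the derivative of `X` in the
direction of the `j`-th basis vector. -/
noncomputable def jacobianMatrix {n : ℕ} (X : (Fin n → ℝ) → (Fin n → ℝ)) (q : Fin n → ℝ) :
    Matrix (Fin n) (Fin n) ℝ :=
  Matrix.of fun i j => fderiv ℝ X q (Pi.single j 1) i

/-- The Lie bracket of two vector fields on ℝⁿ:
`[X,Y](q) = DY(q) X(q) − DX(q) Y(q)`. -/
noncomputable def lieBracket {n : ℕ} (X Y : (Fin n → ℝ) → (Fin n → ℝ)) (q : Fin n → ℝ) :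
    Fin n → ℝ :=
  (jacobianMatrix Y q) *ᵥ X q - (jacobianMatrix X q) *ᵥ Y q

/-- The `j`-th column of a matrix-valued map, viewed as a vector field. -/
def matCol {n : ℕ} (T : (Fin n → ℝ) → Matrix (Fin n) (Fin n) ℝ) (j : Fin n) :
    (Fin n → ℝ) → (Fin n → ℝ) :=
  fun q i => T q i j


theorem contDiff_det_aux {n : ℕ} {M : (Fin n → ℝ) → Matrix (Fin n) (Fin n) ℝ}
    (h : ∀ i j : Fin n, ContDiff ℝ (⊤ : ℕ∞) fun q => M q i j) :
    ContDiff ℝ (⊤ : ℕ∞) fun q => (M q).det := by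
  simp only [Matrix.det_apply']
  refine ContDiff.sum fun σ _ => contDiff_const.mul ?_
  exact contDiff_prod fun i _ => h _ _

theorem contDiff_inv_aux {n : ℕ} {M : (Fin n → ℝ) → Matrix (Fin n) (Fin n) ℝ}
    (h : ∀ i j : Fin n, ContDiff ℝ (⊤ : ℕ∞) fun q => M q i j)
    (hu : ∀ q, IsUnit (M q)) (i j : Fin n) :
    ContDiff ℝ (⊤ : ℕ∞) fun q => (M q)⁻¹ i j := by
  simp only [Matrix.inv_def, Ring.inverse_eq_inv', Matrix.smul_apply, smul_eq_mul,
    Matrix.adjugate_apply]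
  refine ((contDiff_det_aux h).inv fun q => ?_).mul (contDiff_det_aux fun a b => ?_)
  · exact ((Matrix.isUnit_iff_isUnit_det _).1 (hu q)).ne_zero
  · by_cases hab : a = j
    · subst hab
      simp only [Matrix.updateRow_self]
      exact contDiff_const
    · simp only [Matrix.updateRow_ne hab]
      exact h a b

/-- The inverse matrix as a one-form. -/
noncomputable def invForm {n : ℕ} (T : (Fin n → ℝ) → Matrix (Fin n) (Fin n) ℝ)
    (q : Fin n → ℝ) : (Fin n → ℝ) →L[ℝ] (Fin n → ℝ) :=
  LinearMap.toContinuousLinearMap (Matrix.mulVecLin (T q)⁻¹)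

theorem invForm_apply {n : ℕ} (T : (Fin n → ℝ) → Matrix (Fin n) (Fin n) ℝ)
    (q v : Fin n → ℝ) : invForm T q v = (T q)⁻¹ *ᵥ v := rfl

theorem jac_mulVec {n : ℕ} (X : (Fin n → ℝ) → (Fin n → ℝ)) (q v : Fin n → ℝ) :
    jacobianMatrix X q *ᵥ v = fderiv ℝ X q v := by
  have : jacobianMatrix X q = LinearMap.toMatrix' (fderiv ℝ X q : (Fin n → ℝ) →ₗ[ℝ] (Fin n → ℝ)) := by
    ext i j
    simp [jacobianMatrix, LinearMap.toMatrix'_apply]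
  rw [this, LinearMap.toMatrix'_mulVec]
  rfl

theorem contDiff_invForm {n : ℕ} {T : (Fin n → ℝ) → Matrix (Fin n) (Fin n) ℝ}
    (h : ∀ i j : Fin n, ContDiff ℝ (⊤ : ℕ∞) fun q => T q i j)
    (hu : ∀ q, IsUnit (T q)) : ContDiff ℝ (⊤ : ℕ∞) (invForm T) := by
  rw [contDiff_clm_apply_iff]
  intro v
  rw [contDiff_pi]
  intro i
  simp only [invForm_apply, Matrix.mulVec, dotProduct]
  exact ContDiff.sum fun j _ => (contDiff_inv_aux h hu i j).mul contDiff_const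

theorem invForm_col {n : ℕ} {T : (Fin n → ℝ) → Matrix (Fin n) (Fin n) ℝ}
    (hu : ∀ q, IsUnit (T q)) (i : Fin n) (q : Fin n → ℝ) :
    invForm T q (matCol T i q) = Pi.single i 1 := by
  have : matCol T i q = T q *ᵥ Pi.single i 1 := by
    ext k; simp [matCol]
  rw [invForm_apply, this, Matrix.mulVec_mulVec,
    Matrix.nonsing_inv_mul _ ((Matrix.isUnit_iff_isUnit_det _).1 (hu q)), Matrix.one_mulVec]

theorem key_aux {n : ℕ} {T : (Fin n → ℝ) → Matrix (Fin n) (Fin n) ℝ}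
    (h : ∀ i j : Fin n, ContDiff ℝ (⊤ : ℕ∞) fun q => T q i j)
    (hu : ∀ q, IsUnit (T q)) (i : Fin n) (q v : Fin n → ℝ) :
    fderiv ℝ (invForm T) q v (matCol T i q)
      = - invForm T q (fderiv ℝ (matCol T i) q v) := by
  have h1 : DifferentiableAt ℝ (invForm T) q :=
    ((contDiff_invForm h hu).differentiable (by simp)) q
  have h2 : DifferentiableAt ℝ (matCol T i) q :=
    ((contDiff_pi.2 fun k => h k i).differentiable (by simp)) q
  have h3 := h1.hasFDerivAt.clm_apply h2.hasFDerivAt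
  have h4 : (fun y => invForm T y (matCol T i y)) = fun _ => Pi.single i 1 :=
    funext fun y => invForm_col hu i y
  rw [h4] at h3
  have h5 := congrArg (fun L => L v) (h3.unique (hasFDerivAt_const _ _))
  simp at h5
  rw [eq_neg_iff_add_eq_zero, add_comm]
  exact h5

theorem key {n : ℕ} {T : (Fin n → ℝ) → Matrix (Fin n) (Fin n) ℝ}
    (h : ∀ i j : Fin n, ContDiff ℝ (⊤ : ℕ∞) fun q => T q i j)
    (hu : ∀ q, IsUnit (T q)) (i j : Fin n) (q : Fin n → ℝ) :
    invForm T q (lieBracket (matCol T i) (matCol T j) q) =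
    fderiv ℝ (invForm T) q (matCol T j q) (matCol T i q) -
      fderiv ℝ (invForm T) q (matCol T i q) (matCol T j q) := by
  rw [key_aux h hu, key_aux h hu, lieBracket, jac_mulVec, jac_mulVec, map_sub]
  abel

theorem span_aux {n : ℕ} {T : (Fin n → ℝ) → Matrix (Fin n) (Fin n) ℝ}
    (hu : ∀ q, IsUnit (T q)) (q v : Fin n → ℝ) :
    v = ∑ i, ((T q)⁻¹ *ᵥ v) i • matCol T i q := by
  have h1 : T q *ᵥ ((T q)⁻¹ *ᵥ v) = v := by
    rw [Matrix.mulVec_mulVec,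
      Matrix.mul_nonsing_inv _ ((Matrix.isUnit_iff_isUnit_det _).1 (hu q)), Matrix.one_mulVec]
  conv_lhs => rw [← h1]
  ext k
  simp only [Matrix.mulVec, dotProduct, Finset.sum_apply, Pi.smul_apply, smul_eq_mul, matCol]
  exact Finset.sum_congr rfl fun _ _ => mul_comm _ _

/-- for a smooth, everywhere invertible matrix-valued map `T`,
the columns of `T` pairwise commute as vector fields iff there is a smooth map
`Q : ℝⁿ → ℝⁿ` whose Jacobian is `T(q)⁻¹` everywhere. -/
theorem stmt0 {n : ℕ} (T : (Fin n → ℝ) → Matrix (Fin n) (Fin n) ℝ)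
    (hTsmooth : ∀ i j : Fin n, ContDiff ℝ (⊤ : ℕ∞) fun q => T q i j)
    (hTinv : ∀ q : Fin n → ℝ, IsUnit (T q)) :
    (∀ (q : Fin n → ℝ) (i j : Fin n), lieBracket (matCol T i) (matCol T j) q = 0) ↔
      (∃ Q : (Fin n → ℝ) → (Fin n → ℝ), ContDiff ℝ (⊤ : ℕ∞) Q ∧
        ∀ q : Fin n → ℝ, jacobianMatrix Q q = (T q)⁻¹) := by
  constructor
  · intro hb
    have hsm := contDiff_invForm hTsmooth hTinv
    have hsymm : ∀ a ∈ (Set.univ : Set (Fin n → ℝ)), ∀ x y,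
        fderiv ℝ (invForm T) a x y = fderiv ℝ (invForm T) a y x := by
      intro a _ x y
      have hc : ∀ i j, fderiv ℝ (invForm T) a (matCol T j a) (matCol T i a) =
          fderiv ℝ (invForm T) a (matCol T i a) (matCol T j a) := by
        intro i j
        have := key hTsmooth hTinv i j a
        rw [hb, map_zero] at this
        exact (sub_eq_zero.1 this.symm)
      rw [span_aux hTinv a x, span_aux hTinv a y]
      generalize (T a)⁻¹ *ᵥ x = c
      generalize (T a)⁻¹ *ᵥ y = d
      simp only [map_sum, map_smul, _root_.sum_apply,
        _root_.smul_apply, Finset.smul_sum]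
      rw [Finset.sum_comm]
      refine Finset.sum_congr rfl fun i _ => Finset.sum_congr rfl fun j _ => ?_
      rw [hc i j, smul_comm]
    obtain ⟨Q, hQ⟩ := convex_univ.exists_forall_hasFDerivAt_of_fderiv_symmetric isOpen_univ
      (hsm.differentiable (by simp)).differentiableOn hsymm
    have hfd : fderiv ℝ Q = invForm T := funext fun q => (hQ q trivial).fderiv
    refine ⟨Q, ?_, fun q => ?_⟩
    · rw [contDiff_infty_iff_fderiv]
      exact ⟨fun q => (hQ q trivial).differentiableAt, hfd ▸ hsm⟩
    · ext i j
      simp [jacobianMatrix, hfd, invForm_apply]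
  · rintro ⟨Q, hQ, hJ⟩ q i j
    have hfd : fderiv ℝ Q = invForm T := by
      funext q
      ext1 v
      rw [← jac_mulVec, hJ, invForm_apply]
    have hs : IsSymmSndFDerivAt ℝ Q q :=
      hQ.contDiffAt.isSymmSndFDerivAt (by
        rw [minSmoothness_of_isRCLikeNormedField]
        exact WithTop.coe_le_coe.2 (le_top : (2 : ℕ∞) ≤ ⊤))
    have h1 := key hTsmooth hTinv i j q
    rw [← hfd, hs.eq, sub_self, hfd, invForm_apply] at h1
    have h2 := congrArg (fun w => T q *ᵥ w) h1
    simpa [Matrix.mulVec_mulVec,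
      Matrix.mul_nonsing_inv _ ((Matrix.isUnit_iff_isUnit_det _).1 (hTinv q))] using h2
end

section
/- Let m_r, m, L₃ > 0 and set a = 1/√(m_r + m), c = √((m_r + m)/(m L₃² m_r)), b = 1/(c L₃ m_r). Define T : ℝ³ → ℝ^{3×3} by T(q) = [[a, 0, −b cos q₃], [0, a, −b sin q₃], [0, 0, c]] and M(q) = [[m_r + m, 0, m L₃ cos q₃], [0, m_r + m, m L₃ sin q₃], [m L₃ cos q₃, m L₃ sin q₃, m L₃²]]. Then: (a) the columns of T, viewed as vector fields on ℝ³, pairwise commute, i.e. [(T)_i, (T)_j](q) = 0 for all q ∈ ℝ³ and i, j ∈ {1,2,3}; and (b) T(q) T(q)^⊤ M(q) = I₃ for all q ∈ ℝ³, i.e. T is a factor of the inverse inertia matrix M(q)^{-1} = T(q)T(q)^⊤. -/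
open Matrix

/-- 2D spider crane gantry cart. The columns of the factor `T(q)`
pairwise commute as vector fields, and `T(q)T(q)ᵀ M(q) = I₃`, i.e. `T` is a
factor of the inverse inertia matrix. -/
theorem stmt14 (mr m L3 : ℝ) (hmr : 0 < mr) (hm : 0 < m) (hL3 : 0 < L3)
    (a b c : ℝ)
    (ha : a = 1 / Real.sqrt (mr + m))
    (hc : c = Real.sqrt ((mr + m) / (m * L3 ^ 2 * mr)))
    (hb : b = 1 / (c * L3 * mr))
    (T : (Fin 3 → ℝ) → Matrix (Fin 3) (Fin 3) ℝ)
    (hT : ∀ q : Fin 3 → ℝ, T q =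
      !![a, 0, -(b * Real.cos (q 2));
         0, a, -(b * Real.sin (q 2));
         0, 0, c])
    (M : (Fin 3 → ℝ) → Matrix (Fin 3) (Fin 3) ℝ)
    (hM : ∀ q : Fin 3 → ℝ, M q =
      !![mr + m, 0, m * L3 * Real.cos (q 2);
         0, mr + m, m * L3 * Real.sin (q 2);
         m * L3 * Real.cos (q 2), m * L3 * Real.sin (q 2), m * L3 ^ 2]) :
    (∀ (q : Fin 3 → ℝ) (i j : Fin 3),
      lieBracket (matCol T i) (matCol T j) q = 0) ∧
    (∀ q : Fin 3 → ℝ, T q * (T q)ᵀ * M q = 1) := by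
  have e0 : matCol T 0 = fun _ => ![a, 0, 0] := by
    funext q i; fin_cases i <;> simp [matCol, hT]
  have e1 : matCol T 1 = fun _ => ![0, a, 0] := by
    funext q i; fin_cases i <;> simp [matCol, hT]
  have e2 : matCol T 2 =
      fun q => ![-(b * Real.cos (q 2)), -(b * Real.sin (q 2)), c] := by
    funext q i; fin_cases i <;> simp [matCol, hT]
  have j0 : ∀ q, jacobianMatrix (matCol T 0) q = 0 := by
    intro q; ext i k; simp [jacobianMatrix, e0]
  have j1 : ∀ q, jacobianMatrix (matCol T 1) q = 0 := by
    intro q; ext i k; simp [jacobianMatrix, e1]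
  have j2 : ∀ q, jacobianMatrix (matCol T 2) q =
      !![0, 0, b * Real.sin (q 2); 0, 0, -(b * Real.cos (q 2)); 0, 0, 0] := by
    intro q
    have hp : HasFDerivAt (fun q : Fin 3 → ℝ => q 2)
        (ContinuousLinearMap.proj (R := ℝ) (φ := fun _ : Fin 3 => ℝ) 2) q :=
      hasFDerivAt_apply 2 q
    have hd : HasFDerivAt (matCol T 2) (ContinuousLinearMap.pi
        ![-(b • (-Real.sin (q 2) • ContinuousLinearMap.proj (R := ℝ) (φ := fun _ : Fin 3 => ℝ) 2)),
          -(b • (Real.cos (q 2) • ContinuousLinearMap.proj (R := ℝ) (φ := fun _ : Fin 3 => ℝ) 2)),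
          0]) q := by
      rw [e2, hasFDerivAt_pi]
      intro i
      fin_cases i
      · exact (hp.cos.const_mul b).neg
      · exact (hp.sin.const_mul b).neg
      · exact hasFDerivAt_const c q
    ext i k
    simp only [jacobianMatrix, hd.fderiv]
    fin_cases i <;> fin_cases k <;> simp
  refine ⟨?_, ?_⟩
  · intro q i j
    fin_cases i <;> fin_cases j <;>
      simp [lieBracket, j0, j1, j2] <;>
      simp [e0, e1, Matrix.vecHead, Matrix.vecTail]
  · intro q
    have hs : 0 < mr + m := by positivity
    have hcp : 0 < c := by rw [hc]; positivity
    have ha2 : a ^ 2 = 1 / (mr + m) := by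
      rw [ha, div_pow, Real.sq_sqrt hs.le, one_pow]
    have hc2 : c ^ 2 = (mr + m) / (m * L3 ^ 2 * mr) := by
      rw [hc, Real.sq_sqrt (by positivity)]
    have hbc : b * c = 1 / (L3 * mr) := by
      rw [hb]; field_simp
    have hb2 : b ^ 2 = m / (mr * (mr + m)) := by
      rw [hb, div_pow, mul_pow, mul_pow, hc2]; field_simp
    have h1 : a ^ 2 * (mr + m) = 1 := by rw [ha2]; field_simp
    have h2 : b ^ 2 * (mr + m) = b * c * (m * L3) := by rw [hb2, hbc]; field_simp
    have h3 : c ^ 2 * (m * L3) = b * c * (mr + m) := by rw [hc2, hbc]; field_simp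
    have h4 : a ^ 2 + b ^ 2 = b * c * L3 := by rw [ha2, hb2, hbc]; field_simp
    have h5 : c ^ 2 * (m * L3 ^ 2) - b * c * (m * L3) = 1 := by rw [hc2, hbc]; field_simp; ring
    have ht := Real.sin_sq_add_cos_sq (q 2)
    rw [hT, hM]
    generalize Real.sin (q 2) = s at ht ⊢
    generalize Real.cos (q 2) = C at ht ⊢
    ext i j
    fin_cases i <;> fin_cases j <;>
      simp [Matrix.mul_apply, Matrix.vecMul, dotProduct, Matrix.transpose_apply, Fin.sum_univ_three]
    · linear_combination h1 + C ^ 2 * h2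
    · linear_combination C * s * h2
    · linear_combination m * L3 * C * h4 + b ^ 2 * m * L3 * C * ht
    · linear_combination C * s * h2
    · linear_combination h1 + s ^ 2 * h2
    · linear_combination m * L3 * s * h4 + b ^ 2 * m * L3 * s * ht
    · linear_combination C * h3
    · linear_combination s * h3
    · linear_combination h5 - b * c * m * L3 * ht
end
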